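/- For every β > 0, the map G_β(c) = 4β(-ln c)/(c²(1 + (1/2)β ln c)) is continuous and strictly decreasing on the interval (e^{-2/β}, 1), with G_β(c) → 0 as c → 1⁻ and G_β(c) → +∞ as c → (e^{-2/β})⁺; consequently, for every K > 0 there is exactly one c ∈ (e^{-2/β}, 1) with G_β(c) = K. -/

import Mathlib

/-!
For `c` above `exp (-2 / β)` the denominator `c ^ 2 * (1 + β * log c / 2)` is a product of positive
increasing factors, while the numerator `4 * β * (-log c)` decreases, to `0` at `c = 1`. So the
quotient decreases strictly. At the left endpoint the denominator tends to `0⁺` and the numerator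
to `8`, so the quotient blows up there, and the intermediate value theorem gives every positive
value exactly once.
-/

open Real Set Filter

lemma existsUnique_mem_eq_of_isPreconnected_of_injOn {X α : Type*} [TopologicalSpace X]
    [LinearOrder α] [TopologicalSpace α] [OrderClosedTopology α] {s : Set X} {f : X → α}
    {l₁ l₂ : Filter X} [NeBot l₁] [NeBot l₂] {v y : α} (hs : IsPreconnected s)
    (hl₁ : s ∈ l₁) (hl₂ : s ∈ l₂) (hcont : ContinuousOn f s) (hinj : InjOn f s)
    (hlim : Tendsto f l₁ (nhds v)) (htop : Tendsto f l₂ atTop) (hy : v < y) :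
    ∃! x, x ∈ s ∧ f x = y := by
  obtain ⟨x, hx, hxy⟩ := hs.intermediate_value_Ioi (le_principal_iff.2 hl₁)
    (le_principal_iff.2 hl₂) hcont hlim htop hy
  exact ⟨x, ⟨hx, hxy⟩, fun z hz => hinj hz.1 hx (hz.2.trans hxy.symm)⟩

lemma strictAntiOn_div_of_strictAntiOn_of_monotoneOn {ι G₀ : Type*} [Preorder ι]
    [GroupWithZero G₀] [PartialOrder G₀] [PosMulReflectLT G₀] [MulPosReflectLT G₀] {s : Set ι}
    {f g : ι → G₀} (hf : StrictAntiOn f s) (hg : MonotoneOn g s)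
    (hf_nonneg : ∀ x ∈ s, 0 ≤ f x) (hg_pos : ∀ x ∈ s, 0 < g x) :
    StrictAntiOn (fun x => f x / g x) s := fun x hx _ hy hxy =>
  div_lt_div₀ (hf hx hy hxy) (hg hx hy hxy.le) (hf_nonneg x hx) (hg_pos x hx)

lemma tendsto_div_atTop_of_pos_of_nhdsGT_zero {ι 𝕜 : Type*} [Semifield 𝕜] [LinearOrder 𝕜]
    [IsStrictOrderedRing 𝕜] [TopologicalSpace 𝕜] [OrderTopology 𝕜] {l : Filter ι} {f g : ι → 𝕜}
    {C : 𝕜} (hC : 0 < C) (hf : Tendsto f l (nhds C)) (hg : Tendsto g l (nhdsWithin 0 (Ioi 0))) :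
    Tendsto (fun x => f x / g x) l atTop := by
  simpa only [div_eq_mul_inv, Pi.inv_apply] using hf.pos_mul_atTop hC hg.inv_tendsto_nhdsGT_zero

/-- The product `c * (c - b)`, with `b = β * c * (-log c) / 2`, of the values at `r = 1` and `r = 0`
of `exp (-θ / 2)` for the steady state `θ r = -2 * log (c - b + b * r ^ 2)`. For `c > 0` it is
positive exactly when `c - b + b * r ^ 2` is positive on `[0, 1]`, and then
`∫₀¹ exp (θ r) * r dr = 1 / (2 * c * (c - b))`. -/
noncomputable def steadyStateDenom (β c : ℝ) : ℝ := c ^ 2 * (1 + β * log c / 2)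

/-- The value of `λ𝓘²` for which `θ r = -2 * log (c - b + b * r ^ 2)`, `b = β * c * (-log c) / 2`,
is a steady state; the parameter `c` encodes the boundary value `θ 1 = -2 * log c`. -/
noncomputable def steadyStateLoad (β c : ℝ) : ℝ := 4 * β * (-log c) / steadyStateDenom β c

section

variable {β c : ℝ}

lemma exp_neg_two_div_lt_one (hβ : 0 < β) : exp (-2 / β) < 1 :=
  exp_lt_one_iff.2 (div_neg_of_neg_of_pos (by norm_num) hβ)

lemma one_add_mul_log_div_two_pos_iff (hβ : 0 < β) (hc : 0 < c) :
    0 < 1 + β * log c / 2 ↔ exp (-2 / β) < c := by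
  rw [← lt_log_iff_exp_lt hc, div_lt_iff₀ hβ]
  constructor <;> intro h <;> linarith

lemma steadyStateDenom_pos (hβ : 0 < β) (hc : exp (-2 / β) < c) : 0 < steadyStateDenom β c := by
  have hc_pos : 0 < c := (exp_pos _).trans hc
  exact mul_pos (pow_pos hc_pos 2) ((one_add_mul_log_div_two_pos_iff hβ hc_pos).2 hc)

lemma steadyStateDenom_exp_neg_two_div (hβ : β ≠ 0) : steadyStateDenom β (exp (-2 / β)) = 0 := by
  rw [steadyStateDenom, log_exp, mul_div_cancel₀ _ hβ]
  norm_num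

lemma continuousAt_steadyStateDenom (hc : c ≠ 0) : ContinuousAt (steadyStateDenom β) c := by
  unfold steadyStateDenom
  fun_prop (disch := assumption)

lemma monotoneOn_steadyStateDenom (hβ : 0 < β) :
    MonotoneOn (steadyStateDenom β) (Ioi (exp (-2 / β))) := by
  intro x hx y _ hxy
  have hx_pos : 0 < x := (exp_pos _).trans hx
  have hfactor : 0 < 1 + β * log x / 2 := (one_add_mul_log_div_two_pos_iff hβ hx_pos).2 hx
  unfold steadyStateDenom
  gcongr

lemma tendsto_steadyStateDenom_nhdsGT_zero (hβ : 0 < β) :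
    Tendsto (steadyStateDenom β) (nhdsWithin (exp (-2 / β)) (Ioi (exp (-2 / β))))
      (nhdsWithin 0 (Ioi 0)) := by
  have hmaps : MapsTo (steadyStateDenom β) (Ioi (exp (-2 / β))) (Ioi 0) :=
    fun _ hc => steadyStateDenom_pos hβ hc
  have hcont : ContinuousAt (steadyStateDenom β) (exp (-2 / β)) :=
    continuousAt_steadyStateDenom (exp_ne_zero _)
  simpa only [steadyStateDenom_exp_neg_two_div hβ.ne'] using
    hcont.continuousWithinAt.tendsto_nhdsWithin hmaps

lemma steadyStateLoad_one : steadyStateLoad β 1 = 0 := by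
  simp [steadyStateLoad]

lemma continuousAt_steadyStateLoad (hβ : 0 < β) (hc : exp (-2 / β) < c) :
    ContinuousAt (steadyStateLoad β) c := by
  have hc_ne : c ≠ 0 := ((exp_pos _).trans hc).ne'
  exact (continuousAt_const.mul (continuousAt_log hc_ne).neg).div
    (continuousAt_steadyStateDenom hc_ne) (steadyStateDenom_pos hβ hc).ne'

lemma strictAntiOn_steadyStateLoad (hβ : 0 < β) :
    StrictAntiOn (steadyStateLoad β) (Ioc (exp (-2 / β)) 1) := by
  have hpos : ∀ c ∈ Ioc (exp (-2 / β)) 1, 0 < c := fun _ hc => (exp_pos _).trans hc.1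
  refine strictAntiOn_div_of_strictAntiOn_of_monotoneOn ?_
    ((monotoneOn_steadyStateDenom hβ).mono Ioc_subset_Ioi_self) ?_
    fun c hc => steadyStateDenom_pos hβ hc.1
  · intro x hx y _ hxy
    have hlog : log x < log y := log_lt_log (hpos x hx) hxy
    dsimp only
    gcongr
  · intro c hc
    have hlog : log c ≤ 0 := log_nonpos (hpos c hc).le hc.2
    exact mul_nonneg (by positivity) (neg_nonneg.2 hlog)

lemma tendsto_steadyStateLoad_nhds_one (hβ : 0 < β) :
    Tendsto (steadyStateLoad β) (nhds 1) (nhds 0) := by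
  simpa only [steadyStateLoad_one] using
    (continuousAt_steadyStateLoad hβ (exp_neg_two_div_lt_one hβ)).tendsto

lemma tendsto_steadyStateLoad_atTop (hβ : 0 < β) :
    Tendsto (steadyStateLoad β) (nhdsWithin (exp (-2 / β)) (Ioi (exp (-2 / β)))) atTop := by
  have hnum : Tendsto (fun c => 4 * β * (-log c)) (nhds (exp (-2 / β))) (nhds 8) := by
    have heq : 4 * β * (-log (exp (-2 / β))) = 8 := by
      rw [log_exp]
      field_simp
      norm_num
    simpa only [heq] using (continuousAt_log (exp_ne_zero (-2 / β))).tendsto.neg.const_mul (4 * β)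
  exact tendsto_div_atTop_of_pos_of_nhdsGT_zero (by norm_num) (hnum.mono_left nhdsWithin_le_nhds)
    (tendsto_steadyStateDenom_nhdsGT_zero hβ)

end

/-- For β > 0, G_β(c) = 4β(-ln c)/(c²(1 + (1/2)β ln c)) is continuous and
strictly decreasing on (e^{-2/β}, 1), with G_β(c) → 0 as c → 1⁻ and G_β(c) → +∞ as
c → (e^{-2/β})⁺; hence for every K > 0 there is exactly one c in the interval with
G_β(c) = K. -/
theorem current_controlled_steady_state_parametrization (β : ℝ) (hβ : 0 < β)
    (G : ℝ → ℝ)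
    (hG : ∀ c : ℝ, G c = 4 * β * (-Real.log c) / (c ^ 2 * (1 + β * Real.log c / 2))) :
    ContinuousOn G (Set.Ioo (Real.exp (-2 / β)) 1) ∧
    StrictAntiOn G (Set.Ioo (Real.exp (-2 / β)) 1) ∧
    Filter.Tendsto G (nhdsWithin 1 (Set.Iio 1)) (nhds 0) ∧
    Filter.Tendsto G (nhdsWithin (Real.exp (-2 / β)) (Set.Ioi (Real.exp (-2 / β))))
      Filter.atTop ∧
    (∀ K : ℝ, 0 < K → ∃! c : ℝ, c ∈ Set.Ioo (Real.exp (-2 / β)) 1 ∧ G c = K) := by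
  obtain rfl : G = steadyStateLoad β := funext hG
  have hlt : exp (-2 / β) < 1 := exp_neg_two_div_lt_one hβ
  have hcont : ContinuousOn (steadyStateLoad β) (Ioo (exp (-2 / β)) 1) :=
    fun _ hc => (continuousAt_steadyStateLoad hβ hc.1).continuousWithinAt
  have hanti : StrictAntiOn (steadyStateLoad β) (Ioo (exp (-2 / β)) 1) :=
    (strictAntiOn_steadyStateLoad hβ).mono Ioo_subset_Ioc_self
  have hone : Tendsto (steadyStateLoad β) (nhdsWithin 1 (Iio 1)) (nhds 0) :=
    (tendsto_steadyStateLoad_nhds_one hβ).mono_left nhdsWithin_le_nhds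
  have htop := tendsto_steadyStateLoad_atTop hβ
  exact ⟨hcont, hanti, hone, htop, fun _ hK =>
    existsUnique_mem_eq_of_isPreconnected_of_injOn isPreconnected_Ioo (Ioo_mem_nhdsLT hlt)
      (Ioo_mem_nhdsGT hlt) hcont hanti.injOn hone htop hK⟩
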